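/- arXiv:2105.07181 — 2 statements merged into one kernel-verified Lean document; each statement's English description precedes it below -/
import Mathlib

section
/- Let the index set {1,…,N} be partitioned into H of size N₁ and L of size N₂ (N = N₁ + N₂), let 1 ≤ n₁ ≤ N₁, 1 ≤ n₂ ≤ N₂, m = n₁ + n₂, and let g₁,…,g_N be vectors in a real inner product space satisfying the typicality condition ∑_{i∈H} g_i = ∑_{i=1}^N g_i. Let ĝ_TS = (1/m)·( ∑_{i∈h} g_i + ∑_{j∈l} g_j ), where h is a uniformly random n₁-subset of H and l is an independent uniformly random n₂-subset of L. Then E[ĝ_TS] = (n₁·N)/(N₁·m) · ḡ, where ḡ = (1/N)·∑_{i=1}^N g_i is the full gradient. -/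
open Finset

/-- Expectation of `f` under the uniform distribution over all `n`-element
subsets of `S` (simple random sampling without replacement). -/
noncomputable def uExp {N : ℕ} {E : Type*} [AddCommGroup E] [Module ℝ E]
    (S : Finset (Fin N)) (n : ℕ) (f : Finset (Fin N) → E) : E :=
  ((S.powersetCard n).card : ℝ)⁻¹ • ∑ s ∈ S.powersetCard n, f s

/-- Expectation of `f` when `h` is a uniformly random `n₁`-subset of `S` and,
independently, `l` is a uniformly random `n₂`-subset of `T`. -/
noncomputable def u2Exp {N : ℕ} {E : Type*} [AddCommGroup E] [Module ℝ E]
    (S T : Finset (Fin N)) (n₁ n₂ : ℕ)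
    (f : Finset (Fin N) → Finset (Fin N) → E) : E :=
  (((S.powersetCard n₁).card : ℝ) * ((T.powersetCard n₂).card : ℝ))⁻¹ •
    ∑ h ∈ S.powersetCard n₁, ∑ l ∈ T.powersetCard n₂, f h l

/-!
Each element of `S` lies in the same number of `n`-subsets of `S`, so the sum over a random
`n`-subset has mean `(n / #S) • ∑ i ∈ S, f i`. Typicality makes the gradients over `L` sum to zero,
so the `L`-part of the minibatch has mean zero, and the `H`-part has mean `n₁ / N₁` times the total
gradient.
-/

theorem sum_powersetCard_succ_sum {α M : Type*} [AddCommMonoid M] (S : Finset α) (n : ℕ)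
    (f : α → M) :
    ∑ s ∈ S.powersetCard (n + 1), ∑ i ∈ s, f i = (#S - 1).choose n • ∑ i ∈ S, f i := by
  classical
  have card_containing {i : α} (hi : i ∈ S) :
      #{s ∈ S.powersetCard (n + 1) | i ∈ s} = (#S - 1).choose n := by
    simpa using card_filter_powersetCard_subset {i} S (n + 1) (by simpa using hi) (by simp)
  calc ∑ s ∈ S.powersetCard (n + 1), ∑ i ∈ s, f i
      = ∑ i ∈ S, ∑ s ∈ S.powersetCard (n + 1) with i ∈ s, f i := by
        refine sum_comm' fun s i ↦ ?_
        simp only [mem_powersetCard, mem_filter]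
        exact ⟨fun h ↦ ⟨h, h.1.1 h.2⟩, And.left⟩
    _ = ∑ i ∈ S, (#S - 1).choose n • f i :=
        sum_congr rfl fun i hi ↦ by rw [sum_const, card_containing hi]
    _ = (#S - 1).choose n • ∑ i ∈ S, f i := (smul_sum ..).symm

section Expectation

variable {N : ℕ} {E : Type*} [AddCommGroup E] [Module ℝ E] {S T : Finset (Fin N)} {n n₁ n₂ : ℕ}

theorem uExp_const (hn : n ≤ #S) (c : E) : uExp S n (fun _ ↦ c) = c := by
  have hcard : (#(S.powersetCard n) : ℝ) ≠ 0 :=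
    Nat.cast_ne_zero.2 (powersetCard_nonempty.2 hn).card_ne_zero
  rw [uExp, sum_const, ← Nat.cast_smul_eq_nsmul ℝ, inv_smul_smul₀ hcard]

theorem uExp_add (f f' : Finset (Fin N) → E) :
    uExp S n (fun s ↦ f s + f' s) = uExp S n f + uExp S n f' := by
  simp only [uExp, sum_add_distrib, smul_add]

theorem uExp_smul (c : ℝ) (f : Finset (Fin N) → E) :
    uExp S n (fun s ↦ c • f s) = c • uExp S n f := by
  rw [uExp, uExp, ← smul_sum, smul_comm]

theorem uExp_sum (hn : n ≤ #S) (f : Fin N → E) :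
    uExp S n (fun s ↦ ∑ i ∈ s, f i) = ((n : ℝ) / #S) • ∑ i ∈ S, f i := by
  cases n with
  | zero => simp [uExp]
  | succ k =>
    have hchoose : (#S : ℝ) * (#S - 1).choose k = (#S).choose (k + 1) * (k + 1 : ℕ) := by
      have h := Nat.add_one_mul_choose_eq (#S - 1) k
      rw [Nat.sub_add_cancel (Nat.one_le_of_lt hn)] at h
      exact_mod_cast h
    have hS : (#S : ℝ) ≠ 0 := Nat.cast_ne_zero.2 (Nat.ne_zero_of_lt hn)
    have hS_choose : ((#S).choose (k + 1) : ℝ) ≠ 0 := Nat.cast_ne_zero.2 (Nat.choose_pos hn).ne'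
    rw [uExp, sum_powersetCard_succ_sum, card_powersetCard, ← Nat.cast_smul_eq_nsmul ℝ, smul_smul]
    congr 1
    rw [inv_mul_eq_div, div_eq_div_iff hS_choose hS]
    linear_combination hchoose

theorem u2Exp_eq_uExp_uExp (f : Finset (Fin N) → Finset (Fin N) → E) :
    u2Exp S T n₁ n₂ f = uExp S n₁ fun h ↦ uExp T n₂ (f h) := by
  simp only [u2Exp, uExp, ← smul_sum, smul_smul, mul_inv]

theorem u2Exp_smul (c : ℝ) (f : Finset (Fin N) → Finset (Fin N) → E) :
    u2Exp S T n₁ n₂ (fun h l ↦ c • f h l) = c • u2Exp S T n₁ n₂ f := by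
  simp only [u2Exp_eq_uExp_uExp, uExp_smul]

theorem u2Exp_add_separate (hn₁ : n₁ ≤ #S) (hn₂ : n₂ ≤ #T) (a b : Finset (Fin N) → E) :
    u2Exp S T n₁ n₂ (fun h l ↦ a h + b l) = uExp S n₁ a + uExp T n₂ b := by
  simp only [u2Exp_eq_uExp_uExp, uExp_add, uExp_const hn₁, uExp_const hn₂]

theorem ts_mean_typical_general {H L : Finset (Fin N)} (hHL : IsCompl H L)
    (hn₁ : 1 ≤ n₁) (hn₁H : n₁ ≤ #H) (hn₂L : n₂ ≤ #L) (g : Fin N → E)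
    (htyp : ∑ i ∈ H, g i = ∑ i, g i) :
    u2Exp H L n₁ n₂ (fun h l ↦ ((n₁ + n₂ : ℕ) : ℝ)⁻¹ • (∑ i ∈ h, g i + ∑ j ∈ l, g j))
      = (((n₁ : ℝ) * N) / ((#H : ℝ) * (n₁ + n₂ : ℕ))) • ((N : ℝ)⁻¹ • ∑ i, g i) := by
  have hsumL : ∑ j ∈ L, g j = 0 := by
    simpa only [htyp, add_eq_left] using hHL.sum_add_sum g
  have hN : (N : ℝ) ≠ 0 :=
    Nat.cast_ne_zero.2 (Nat.one_le_iff_ne_zero.1 (hn₁.trans (hn₁H.trans (card_finset_fin_le H))))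
  rw [u2Exp_smul, u2Exp_add_separate hn₁H hn₂L, uExp_sum hn₁H, uExp_sum hn₂L, hsumL, htyp,
    smul_zero, add_zero, smul_smul, smul_smul]
  congr 1
  field_simp

end Expectation

/-- Under the typicality condition `∑_{i∈H} g i = ∑_{i=1}^N g i`, the mean of the
typicality-sampling estimator `ĝ_TS = (1/m)(∑_{i∈h} g i + ∑_{j∈l} g j)` equals
`(n₁ N)/(N₁ m) · ḡ`, where `ḡ = (1/N) ∑_i g i` is the full gradient. -/
theorem ts_mean_typical {N N₁ N₂ n₁ n₂ m : ℕ} (H L : Finset (Fin N))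
    (hdisj : Disjoint H L) (hunion : H ∪ L = Finset.univ)
    (hH : H.card = N₁) (hL : L.card = N₂) (hN : N = N₁ + N₂)
    (hn₁ : 1 ≤ n₁) (hn₁N : n₁ ≤ N₁) (hn₂ : 1 ≤ n₂) (hn₂N : n₂ ≤ N₂)
    (hm : m = n₁ + n₂)
    {E : Type*} [NormedAddCommGroup E] [InnerProductSpace ℝ E] (g : Fin N → E)
    (htyp : ∑ i ∈ H, g i = ∑ i, g i) :
    u2Exp H L n₁ n₂ (fun h l => (m : ℝ)⁻¹ • (∑ i ∈ h, g i + ∑ j ∈ l, g j))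
      = (((n₁ : ℝ) * N) / ((N₁ : ℝ) * m)) • ((N : ℝ)⁻¹ • ∑ i, g i) := by
  subst hH hm
  exact ts_mean_typical_general ⟨hdisj, codisjoint_iff.2 hunion⟩ hn₁ hn₁N (hn₂N.trans_eq hL.symm)
    g htyp
end

section
/- Let the index set {1,…,N} be partitioned into H of size N₁ ≥ 2 and L of size N₂ ≥ 2 (N = N₁ + N₂), let 1 ≤ n₁ ≤ N₁, 1 ≤ n₂ ≤ N₂, m = n₁ + n₂, and let g₁,…,g_N be vectors in a real inner product space satisfying the typicality condition ∑_{i∈H} g_i = ∑_{i=1}^N g_i (equivalently ∑_{j∈L} g_j = 0). Let ĝ_TS = (1/m)·( ∑_{i∈h} g_i + ∑_{j∈l} g_j ), where h is a uniformly random n₁-subset of H and l is an independent uniformly random n₂-subset of L. Then V[ĝ_TS] = (1/m²)·( n₁/(N₁(N₁−1)) )·(1 − n₁/N₁)·( N₁·∑_{i∈H}‖g_i‖² − ‖∑_{i∈H} g_i‖² ) + (1/m²)·( n₂/(N₂(N₂−1)) )·(1 − n₂/N₂)·N₂·∑_{j∈L}‖g_j‖². -/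
open Finset

/-- Variance `V[f] = E[‖f - E[f]‖²]` under independent uniform sampling of an
`n₁`-subset of `S` and an `n₂`-subset of `T`. -/
noncomputable def u2Var {N : ℕ} {E : Type*} [NormedAddCommGroup E] [InnerProductSpace ℝ E]
    (S T : Finset (Fin N)) (n₁ n₂ : ℕ)
    (f : Finset (Fin N) → Finset (Fin N) → E) : ℝ :=
  u2Exp S T n₁ n₂ (fun h l => ‖f h l - u2Exp S T n₁ n₂ f‖ ^ 2)

/-!
The two strata are sampled independently, so the variance of the estimator is `m⁻²` times the sum
of the variances of the two sample sums. A uniformly random `n`-subset `t` of an `N`-set contains a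
given `k`-subset with probability `n.choose k / N.choose k`. Expanding `‖∑ i ∈ t, g i‖ ^ 2` into
diagonal and off-diagonal inner products, the cases `k = 1` and `k = 2` give the first two moments
of the sample sum, hence its variance. Typicality makes `∑ j ∈ L, g j` vanish, which removes the
squared norm of the total over `L`.
-/

open scoped BigOperators

section UniformVariance

variable {ι κ E : Type*} [SeminormedAddCommGroup E] [InnerProductSpace ℝ E] [Module ℚ≥0 E]

/-- The variance `𝔼 ‖X - 𝔼 X‖²` of a vector-valued function `X` under the uniform distribution on
the finite set `s`. -/
noncomputable def uniformVariance (s : Finset ι) (X : ι → E) : ℝ :=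
  𝔼 i ∈ s, ‖X i - 𝔼 j ∈ s, X j‖ ^ 2

lemma inner_expect (s : Finset ι) (X : ι → E) (v : E) :
    inner ℝ v (𝔼 i ∈ s, X i) = 𝔼 i ∈ s, inner ℝ v (X i) :=
  map_expect ((innerₗ E v).restrictScalars ℚ≥0) X s

lemma expect_inner (s : Finset ι) (X : ι → E) (v : E) :
    inner ℝ (𝔼 i ∈ s, X i) v = 𝔼 i ∈ s, inner ℝ (X i) v := by
  simp only [real_inner_comm v, inner_expect]

lemma expect_product_inner (s : Finset ι) (t : Finset κ) (X : ι → E) (Y : κ → E) :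
    𝔼 p ∈ s ×ˢ t, inner ℝ (X p.1) (Y p.2) = inner ℝ (𝔼 i ∈ s, X i) (𝔼 j ∈ t, Y j) := by
  rw [expect_inner]
  simp only [expect_product, inner_expect]

lemma uniformVariance_eq_expect_sub {s : Finset ι} (hs : s.Nonempty) (X : ι → E) :
    uniformVariance s X = 𝔼 i ∈ s, ‖X i‖ ^ 2 - ‖𝔼 i ∈ s, X i‖ ^ 2 := by
  set μ := 𝔼 i ∈ s, X i with hμ
  have hcross : 𝔼 i ∈ s, inner ℝ (X i) μ = ‖μ‖ ^ 2 := by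
    rw [← expect_inner, ← hμ, real_inner_self_eq_norm_sq]
  simp only [uniformVariance, ← hμ, norm_sub_sq_real, expect_add_distrib, expect_sub_distrib,
    ← mul_expect, hcross, expect_const hs]
  ring

lemma uniformVariance_const_smul (c : ℝ) (s : Finset ι) (X : ι → E) :
    uniformVariance s (fun i => c • X i) = c ^ 2 * uniformVariance s X := by
  simp only [uniformVariance, ← smul_expect, ← smul_sub, norm_smul, mul_pow, Real.norm_eq_abs,
    sq_abs, mul_expect]

lemma uniformVariance_product_add {s : Finset ι} {t : Finset κ} (hs : s.Nonempty)
    (ht : t.Nonempty) (X : ι → E) (Y : κ → E) :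
    uniformVariance (s ×ˢ t) (fun p => X p.1 + Y p.2)
      = uniformVariance s X + uniformVariance t Y := by
  have hmean : 𝔼 p ∈ s ×ˢ t, (X p.1 + Y p.2) = 𝔼 i ∈ s, X i + 𝔼 j ∈ t, Y j := by
    simp only [expect_product, expect_add_distrib, expect_const hs, expect_const ht]
  have hsq : 𝔼 p ∈ s ×ˢ t, ‖X p.1 + Y p.2‖ ^ 2
      = 𝔼 i ∈ s, ‖X i‖ ^ 2 + 2 * inner ℝ (𝔼 i ∈ s, X i) (𝔼 j ∈ t, Y j)
        + 𝔼 j ∈ t, ‖Y j‖ ^ 2 := by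
    simp only [norm_add_sq_real, expect_add_distrib, ← mul_expect, expect_product_inner]
    simp only [expect_product, expect_const hs, expect_const ht]
  rw [uniformVariance_eq_expect_sub (hs.product ht), uniformVariance_eq_expect_sub hs,
    uniformVariance_eq_expect_sub ht, hmean, hsq, norm_add_sq_real]
  ring

end UniformVariance

section SamplingWithoutReplacement

variable {α : Type*} {s : Finset α} {n : ℕ}

lemma card_filter_subset_powersetCard_mul_choose [DecidableEq α] {a : Finset α} (has : a ⊆ s)
    (n : ℕ) :
    #{t ∈ s.powersetCard n | a ⊆ t} * (#s).choose #a = (#s).choose n * n.choose #a := by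
  obtain han | hna := le_or_gt #a n
  · rw [card_filter_powersetCard_subset a s n has han, Nat.choose_mul han, mul_comm]
  · have hempty : {t ∈ s.powersetCard n | a ⊆ t} = ∅ := by
      refine filter_eq_empty_iff.2 fun t ht hat => hna.not_ge ?_
      exact (card_le_card hat).trans_eq (mem_powersetCard.1 ht).2
    rw [hempty, card_empty, zero_mul, Nat.choose_eq_zero_of_lt hna, mul_zero]

variable {ι M : Type*} [AddCommMonoid M] [Module ℚ≥0 M]

lemma expect_powersetCard_ite_subset [DecidableEq α] {a : Finset α} (has : a ⊆ s) (hn : n ≤ #s)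
    (x : M) :
    𝔼 t ∈ s.powersetCard n, (if a ⊆ t then x else 0)
      = (n.choose #a / (#s).choose #a : ℚ≥0) • x := by
  have hcount : (#{t ∈ s.powersetCard n | a ⊆ t} * (#s).choose #a : ℚ≥0)
      = (#s).choose n * n.choose #a := by
    exact_mod_cast card_filter_subset_powersetCard_mul_choose has n
  have hs_n : ((#s).choose n : ℚ≥0) ≠ 0 := by exact_mod_cast (Nat.choose_pos hn).ne'
  have hs_a : ((#s).choose #a : ℚ≥0) ≠ 0 := by
    exact_mod_cast (Nat.choose_pos (card_le_card has)).ne'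
  rw [expect, ← sum_filter, sum_const, ← Nat.cast_smul_eq_nsmul ℚ≥0, smul_smul,
    card_powersetCard, inv_mul_eq_div, (div_eq_div_iff hs_n hs_a).2 (by rw [hcount, mul_comm])]

lemma expect_powersetCard_sum_filter_subset [DecidableEq α] {P : Finset ι} {a : ι → Finset α}
    {k : ℕ} (has : ∀ p ∈ P, a p ⊆ s) (hak : ∀ p ∈ P, #(a p) = k) (hn : n ≤ #s)
    (f : ι → M) :
    𝔼 t ∈ s.powersetCard n, ∑ p ∈ P with a p ⊆ t, f p
      = (n.choose k / (#s).choose k : ℚ≥0) • ∑ p ∈ P, f p := by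
  simp only [sum_filter]
  rw [expect_sum_comm, smul_sum]
  refine sum_congr rfl fun p hp => ?_
  rw [expect_powersetCard_ite_subset (has p hp) hn, hak p hp]

lemma expect_powersetCard_sum (hn : n ≤ #s) (f : α → M) :
    𝔼 t ∈ s.powersetCard n, ∑ i ∈ t, f i = (n / #s : ℚ≥0) • ∑ i ∈ s, f i := by
  classical
  have hfilter : ∀ t ∈ s.powersetCard n, {i ∈ s | {i} ⊆ t} = t := fun t ht => by
    simpa only [singleton_subset_iff, filter_mem_eq_inter, inter_eq_right]
      using (mem_powersetCard.1 ht).1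
  have hexpect := expect_powersetCard_sum_filter_subset (P := s) (a := singleton)
    (fun i hi => singleton_subset_iff.2 hi) (fun i _ => card_singleton i) hn f
  rw [Nat.choose_one_right, Nat.choose_one_right] at hexpect
  rw [← hexpect]
  exact expect_congr rfl fun t ht => by rw [hfilter t ht]

lemma expect_powersetCard_sum_offDiag (hn : n ≤ #s) (f : α × α → M) :
    𝔼 t ∈ s.powersetCard n, ∑ p ∈ t.offDiag, f p
      = (n.choose 2 / (#s).choose 2 : ℚ≥0) • ∑ p ∈ s.offDiag, f p := by
  classical
  have hfilter : ∀ t ∈ s.powersetCard n, {p ∈ s.offDiag | {p.1, p.2} ⊆ t} = t.offDiag := by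
    intro t ht
    have hts := (mem_powersetCard.1 ht).1
    ext p
    simp only [mem_filter, mem_offDiag, insert_subset_iff, singleton_subset_iff]
    grind
  rw [← expect_powersetCard_sum_filter_subset (a := fun p : α × α => {p.1, p.2}) _ _ hn f]
  · exact expect_congr rfl fun t ht => by rw [hfilter t ht]
  · intro p hp
    grind
  · exact fun p hp => card_pair (mem_offDiag.1 hp).2.2

end SamplingWithoutReplacement

section SampleSum

variable {α E : Type*} [SeminormedAddCommGroup E] [InnerProductSpace ℝ E]

lemma norm_sum_sq_eq_add_sum_offDiag (s : Finset α) (g : α → E) :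
    ‖∑ i ∈ s, g i‖ ^ 2 = ∑ i ∈ s, ‖g i‖ ^ 2 + ∑ p ∈ s.offDiag, inner ℝ (g p.1) (g p.2) := by
  classical
  calc ‖∑ i ∈ s, g i‖ ^ 2
      = ∑ i ∈ s, ∑ j ∈ s, inner ℝ (g i) (g j) := by
        rw [← real_inner_self_eq_norm_sq, sum_inner]
        simp only [inner_sum]
    _ = ∑ p ∈ s.diag ∪ s.offDiag, inner ℝ (g p.1) (g p.2) := by
        rw [diag_union_offDiag, sum_product]
    _ = ∑ i ∈ s, ‖g i‖ ^ 2 + ∑ p ∈ s.offDiag, inner ℝ (g p.1) (g p.2) := by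
        rw [sum_union (disjoint_diag_offDiag s), sum_diag]
        simp only [real_inner_self_eq_norm_sq]

variable {s : Finset α} {n : ℕ}

lemma expect_powersetCard_norm_sum_sq (hn : n ≤ #s) (g : α → E) :
    𝔼 t ∈ s.powersetCard n, ‖∑ i ∈ t, g i‖ ^ 2
      = n / #s * ∑ i ∈ s, ‖g i‖ ^ 2
        + n * (n - 1) / (#s * (#s - 1)) * (‖∑ i ∈ s, g i‖ ^ 2 - ∑ i ∈ s, ‖g i‖ ^ 2) := by
  simp only [norm_sum_sq_eq_add_sum_offDiag _ g, expect_add_distrib, expect_powersetCard_sum hn,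
    expect_powersetCard_sum_offDiag hn, NNRat.smul_def]
  push_cast [Nat.cast_choose_two]
  rw [div_div_div_cancel_right₀ two_ne_zero, add_sub_cancel_left]

variable [Module ℚ≥0 E]

lemma uniformVariance_powersetCard_sum (hs : 2 ≤ #s) (hn : n ≤ #s) (g : α → E) :
    uniformVariance (s.powersetCard n) (fun t => ∑ i ∈ t, g i)
      = n / (#s * (#s - 1)) * (1 - n / #s)
        * (#s * ∑ i ∈ s, ‖g i‖ ^ 2 - ‖∑ i ∈ s, g i‖ ^ 2) := by
  have hs₀ : (#s : ℝ) ≠ 0 := by positivity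
  have hs₁ : (#s : ℝ) - 1 ≠ 0 := by
    rw [sub_ne_zero]
    exact_mod_cast (show #s ≠ 1 by lia)
  have hmean : ‖𝔼 t ∈ s.powersetCard n, ∑ i ∈ t, g i‖ ^ 2
      = (n / #s) ^ 2 * ‖∑ i ∈ s, g i‖ ^ 2 := by
    rw [expect_powersetCard_sum hn, ← NNRat.cast_smul_eq_nnqsmul ℝ, norm_smul, mul_pow,
      Real.norm_eq_abs, sq_abs]
    push_cast
    rfl
  rw [uniformVariance_eq_expect_sub (powersetCard_nonempty.2 hn), hmean,
    expect_powersetCard_norm_sum_sq hn]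
  field_simp
  ring

end SampleSum

section StratifiedSampling

variable {N n₁ n₂ : ℕ} {E : Type*} {S T : Finset (Fin N)}

lemma u2Exp_eq_expect [AddCommGroup E] [Module ℝ E] [Module ℚ≥0 E]
    (f : Finset (Fin N) → Finset (Fin N) → E) :
    u2Exp S T n₁ n₂ f = 𝔼 p ∈ S.powersetCard n₁ ×ˢ T.powersetCard n₂, f p.1 p.2 := by
  rw [u2Exp, expect, card_product, ← NNRat.cast_smul_eq_nnqsmul ℝ, sum_product]
  push_cast
  rfl

variable [NormedAddCommGroup E] [InnerProductSpace ℝ E]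

lemma u2Var_eq_uniformVariance [Module ℚ≥0 E] (f : Finset (Fin N) → Finset (Fin N) → E) :
    u2Var S T n₁ n₂ f
      = uniformVariance (S.powersetCard n₁ ×ˢ T.powersetCard n₂) (fun p => f p.1 p.2) := by
  simp only [u2Var, uniformVariance, u2Exp_eq_expect]

lemma u2Var_const_smul_sum_add_sum (hS : 2 ≤ #S) (hT : 2 ≤ #T) (hn₁ : n₁ ≤ #S) (hn₂ : n₂ ≤ #T)
    (c : ℝ) (g : Fin N → E) :
    u2Var S T n₁ n₂ (fun h l => c • (∑ i ∈ h, g i + ∑ j ∈ l, g j))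
      = c ^ 2 *
        (n₁ / (#S * (#S - 1)) * (1 - n₁ / #S) * (#S * ∑ i ∈ S, ‖g i‖ ^ 2 - ‖∑ i ∈ S, g i‖ ^ 2)
        + n₂ / (#T * (#T - 1)) * (1 - n₂ / #T)
          * (#T * ∑ j ∈ T, ‖g j‖ ^ 2 - ‖∑ j ∈ T, g j‖ ^ 2)) := by
  -- `Finset.expect` averages with weights in `ℚ≥0`; here they act on `E` through `ℝ`.
  let _ : Module ℚ≥0 E := Module.compHom E (algebraMap ℚ≥0 ℝ)
  rw [u2Var_eq_uniformVariance, uniformVariance_const_smul,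
    uniformVariance_product_add (powersetCard_nonempty.2 hn₁) (powersetCard_nonempty.2 hn₂)
      (fun h => ∑ i ∈ h, g i) (fun l => ∑ j ∈ l, g j),
    uniformVariance_powersetCard_sum hS hn₁, uniformVariance_powersetCard_sum hT hn₂]

end StratifiedSampling

/-- Variance of the typicality-sampling estimator
`ĝ_TS = (1/m)(∑_{i∈h} g i + ∑_{j∈l} g j)` under the typicality condition
`∑_{i∈H} g i = ∑_i g i` (equivalently `∑_{j∈L} g j = 0`):
`V[ĝ_TS] = (1/m²)(n₁/(N₁(N₁−1)))(1 − n₁/N₁)(N₁ ∑_{i∈H}‖g i‖² − ‖∑_{i∈H} g i‖²)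
         + (1/m²)(n₂/(N₂(N₂−1)))(1 − n₂/N₂) N₂ ∑_{j∈L}‖g j‖²`. -/
theorem ts_variance {N N₁ N₂ n₁ n₂ m : ℕ} (H L : Finset (Fin N))
    (hdisj : Disjoint H L) (hunion : H ∪ L = Finset.univ)
    (hH : H.card = N₁) (hL : L.card = N₂) (hN : N = N₁ + N₂)
    (hN₁ : 2 ≤ N₁) (hN₂ : 2 ≤ N₂)
    (hn₁ : 1 ≤ n₁) (hn₁N : n₁ ≤ N₁) (hn₂ : 1 ≤ n₂) (hn₂N : n₂ ≤ N₂)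
    (hm : m = n₁ + n₂)
    {E : Type*} [NormedAddCommGroup E] [InnerProductSpace ℝ E] (g : Fin N → E)
    (htyp : ∑ i ∈ H, g i = ∑ i, g i) :
    u2Var H L n₁ n₂ (fun h l => (m : ℝ)⁻¹ • (∑ i ∈ h, g i + ∑ j ∈ l, g j))
      = (1 / (m : ℝ) ^ 2) * ((n₁ : ℝ) / ((N₁ : ℝ) * ((N₁ : ℝ) - 1)))
          * (1 - (n₁ : ℝ) / N₁)
          * ((N₁ : ℝ) * ∑ i ∈ H, ‖g i‖ ^ 2 - ‖∑ i ∈ H, g i‖ ^ 2)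
        + (1 / (m : ℝ) ^ 2) * ((n₂ : ℝ) / ((N₂ : ℝ) * ((N₂ : ℝ) - 1)))
          * (1 - (n₂ : ℝ) / N₂)
          * ((N₂ : ℝ) * ∑ j ∈ L, ‖g j‖ ^ 2) := by
  have hL₀ : ∑ j ∈ L, g j = 0 := by
    rw [← hunion, sum_union hdisj] at htyp
    exact left_eq_add.1 htyp
  subst hH hL
  rw [u2Var_const_smul_sum_add_sum hN₁ hN₂ hn₁N hn₂N, hL₀, norm_zero]
  ring
end
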